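/- The linear automorphism group Lin(Z²⁰ + F₂₀(X,Y)) ⊆ PGL(3,ℂ) of the smooth plane curve C₂₀ : Z²⁰ + F₂₀(X,Y) = 0 has order 1200 = 60·20, and there exists a group homomorphism φ : ℤ/2 → Aut(SL(2,5)) such that this group is isomorphic to ℤ/5 × (SL(2,5) ⋊_φ ℤ/2). -/

import Mathlib

noncomputable section
open Matrix MvPolynomial

/-- The subgroup of nonzero scalar matrices in `GL(3, ℂ)`. -/
def scalarSub : Subgroup (GL (Fin 3) ℂ) :=
  (Units.map (algebraMap ℂ (Matrix (Fin 3) (Fin 3) ℂ)).toMonoidHom).range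

instance : scalarSub.Normal := by
  constructor
  rintro n ⟨c, rfl⟩ g
  refine ⟨c, ?_⟩
  ext
  simp only [Units.coe_map, RingHom.toMonoidHom_eq_coe, MonoidHom.coe_coe, Units.val_mul]
  rw [← Algebra.commutes (↑c : ℂ) (↑g : Matrix (Fin 3) (Fin 3) ℂ), mul_assoc,
    ← Units.val_mul, mul_inv_cancel, Units.val_one, mul_one]

/-- `PGL(3, ℂ)`: the quotient of `GL(3, ℂ)` by the nonzero scalar matrices. -/
abbrev PGL3 := GL (Fin 3) ℂ ⧸ scalarSub

/-- `g` maps the zero set of `F` in `ℂ³` onto itself. -/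
def Preserves (F : MvPolynomial (Fin 3) ℂ) (g : GL (Fin 3) ℂ) : Prop :=
  (fun v => (g : Matrix (Fin 3) (Fin 3) ℂ).mulVec v) '' {v : Fin 3 → ℂ | eval v F = 0}
    = {v : Fin 3 → ℂ | eval v F = 0}

/-- The subgroup of `GL(3, ℂ)` of matrices mapping the zero set of `F` onto itself. -/
def LinGL (F : MvPolynomial (Fin 3) ℂ) : Subgroup (GL (Fin 3) ℂ) where
  carrier := {g | Preserves F g}
  one_mem' := by
    show Preserves F 1
    unfold Preserves
    simp [Matrix.one_mulVec]
  mul_mem' := by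
    intro a b ha hb
    show Preserves F (a * b)
    unfold Preserves at *
    have h : (fun v => ((a * b : GL (Fin 3) ℂ) : Matrix (Fin 3) (Fin 3) ℂ).mulVec v)
        = (fun v => (a : Matrix (Fin 3) (Fin 3) ℂ).mulVec v) ∘
          (fun v => (b : Matrix (Fin 3) (Fin 3) ℂ).mulVec v) := by
      funext v
      simp [Matrix.mulVec_mulVec]
    rw [h, Set.image_comp, hb, ha]
  inv_mem' := by
    intro a ha
    show Preserves F a⁻¹
    unfold Preserves at *
    conv_lhs => rw [← ha, ← Set.image_comp]
    have h : ((fun v => ((a⁻¹ : GL (Fin 3) ℂ) : Matrix (Fin 3) (Fin 3) ℂ).mulVec v) ∘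
        (fun v => (a : Matrix (Fin 3) (Fin 3) ℂ).mulVec v)) = id := by
      funext v
      rw [Function.comp_apply, Matrix.mulVec_mulVec, ← Units.val_mul, inv_mul_cancel,
        Units.val_one, Matrix.one_mulVec, id_eq]
    rw [h, Set.image_id]

/-- The linear automorphism group `Lin(F) ⊆ PGL(3, ℂ)`:
classes of matrices mapping the zero set of `F` onto itself. -/
def Lin (F : MvPolynomial (Fin 3) ℂ) : Subgroup PGL3 :=
  (LinGL F).map (QuotientGroup.mk' scalarSub)

/-- `G = Z²⁰ + F₂₀(X, Y)` with `X = X 0`, `Y = X 1`, `Z = X 2`. -/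
def G20 : MvPolynomial (Fin 3) ℂ :=
  X 2 ^ 20 +
    (X 0 ^ 20 - 228 * (X 0 ^ 15 * X 1 ^ 5 - X 0 ^ 5 * X 1 ^ 15)
      + 494 * X 0 ^ 10 * X 1 ^ 10 + X 1 ^ 20)


/-! ### The explicit model of the two-dimensional representation of `SL(2,5)` -/

abbrev SL25 := Matrix.SpecialLinearGroup (Fin 2) (ZMod 5)

/-- the quadratic character of `ZMod 5`. -/
def chi (k : ZMod 5) : ℤ := if k = 0 then 0 else if k = 1 then 1 else if k = 4 then 1 else -1

/-- coefficients (in the group ring of `ZMod 5`) of five times a matrix entry. -/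
def ent (a b c d x y : ZMod 5) (k : ZMod 5) : ℤ :=
  if c = 0 then
    (if k = a * b * x * x * 3 then
      5 * chi a * ((if a * x = y then 1 else 0) - (if a * x = -y then 1 else 0)) else 0)
  else
    let ic := c * c * c
    chi c * (chi (k - ((a * x * x + d * y * y) * 3 * ic) - x * y * ic)
      - chi (k - ((a * x * x + d * y * y) * 3 * ic) + x * y * ic))

def cnv (v w : ZMod 5 → ℤ) (k : ZMod 5) : ℤ :=
  v 0 * w k + v 1 * w (k - 1) + v 2 * w (k - 2) + v 3 * w (k - 3) + v 4 * w (k - 4)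

/-- defect of multiplicativity -/
def dfct (a b c d a' b' c' d' x y k : ZMod 5) : ℤ :=
  5 * ent (a * a' + b * c') (a * b' + b * d') (c * a' + d * c') (c * b' + d * d') x y k
    - (cnv (ent a b c d x 1) (ent a' b' c' d' 1 y) k
      + cnv (ent a b c d x 3) (ent a' b' c' d' 3 y) k)

set_option maxRecDepth 100000 in
theorem dfct_u : ∀ a b c d : ZMod 5, a * d - b * c = 1 → ∀ x ∈ [(1 : ZMod 5), 3],
    ∀ y ∈ [(1 : ZMod 5), 3], ∀ k : ZMod 5,
    dfct a b c d 1 1 0 1 x y k = dfct a b c d 1 1 0 1 x y 0 := by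
  decide +kernel

set_option maxRecDepth 100000 in
theorem dfct_w : ∀ a b c d : ZMod 5, a * d - b * c = 1 → ∀ x ∈ [(1 : ZMod 5), 3],
    ∀ y ∈ [(1 : ZMod 5), 3], ∀ k : ZMod 5,
    dfct a b c d 0 4 1 0 x y k = dfct a b c d 0 4 1 0 x y 0 := by
  decide +kernel

def uu : SL25 := ⟨!![1, 1; 0, 1], by simp [Matrix.det_fin_two]⟩
def ww : SL25 := ⟨!![0, 4; 1, 0], by rw [Matrix.det_fin_two]; decide⟩
def mkg (a b c d : ZMod 5) (h : a * d - b * c = 1) : SL25 :=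
  ⟨!![a, b; c, d], by rw [Matrix.det_fin_two]; exact h⟩

theorem exists_mkg (g : SL25) : ∃ a b c d h, g = mkg a b c d h := by
  obtain ⟨m, hm⟩ := g
  refine ⟨m 0 0, m 0 1, m 1 0, m 1 1, ?_, ?_⟩
  · rw [Matrix.det_fin_two] at hm; exact hm
  · apply Subtype.ext; exact Matrix.eta_fin_two m

theorem mkg_mul (a b c d h a' b' c' d' h') : mkg a b c d h * mkg a' b' c' d' h' =
    mkg (a * a' + b * c') (a * b' + b * d') (c * a' + d * c') (c * b' + d * d')
      (by linear_combination (a * d - b * c) * h' + h) := by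
  apply Subtype.ext
  show !![a, b; c, d] * !![a', b'; c', d'] = _
  rw [Matrix.mul_fin_two]; rfl

theorem uu_pow (t : ℕ) : uu ^ t = mkg 1 t 0 1 (by ring) := by
  induction t with
  | zero => rw [pow_zero]; simp only [Nat.cast_zero]; decide
  | succ n ih =>
    rw [pow_succ, ih, show uu = mkg 1 1 0 1 (by ring) from rfl, mkg_mul]
    congr 1; push_cast; ring

theorem mkg_congr {a b c d a' b' c' d' : ZMod 5} (h h') (h1 : a = a') (h2 : b = b') (h3 : c = c')
    (h4 : d = d') : mkg a b c d h = mkg a' b' c' d' h' := by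
  subst h1 h2 h3 h4; rfl

theorem SL25_gen (P : Submonoid SL25) (hu1 : uu ∈ P) (hw : ww ∈ P) (g : SL25) : g ∈ P := by
  have hu : ∀ t, mkg 1 t 0 1 (by ring) ∈ P := by
    intro t
    have := pow_mem hu1 t.val
    rw [uu_pow] at this
    simpa using this
  have hww : ww = mkg 0 4 1 0 (by decide) := rfl
  have h5 : (5 : ZMod 5) = 0 := by decide
  have hc : ∀ a b c d h, c ≠ 0 → mkg a b c d h ∈ P := by
    intro a b c d h hg
    have key : mkg a b c d h = mkg 1 ((a - 1) * (c * c * c)) 0 1 (by ring) * ww * mkg 1 (-c) 0 1 (by ring)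
        * ww * ww * ww * mkg 1 ((d - 1) * (c * c * c)) 0 1 (by ring) := by
      rw [hww]
      simp only [mkg_mul]
      have hcc : c * (c * c * c) = 1 := (by decide : ∀ c : ZMod 5, c ≠ 0 → c * (c * c * c) = 1) c hg
      have h4 : (4 : ZMod 5) = -1 := by decide
      have hb : b = (a * d - 1) * (c * c * c) := by
        linear_combination -(c * c * c) * h - b * hcc
      apply mkg_congr
      · rw [h4]; linear_combination (1 - a) * hcc
      · rw [h4, hb]; linear_combination (1 - a) * (d - 1) * (c * c * c) * hcc
      · rw [h4]; ring
      · rw [h4]; linear_combination (1 - d) * hcc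
    rw [key]
    exact mul_mem (mul_mem (mul_mem (mul_mem (mul_mem (mul_mem (hu _) hw) (hu _)) hw) hw) hw) (hu _)
  obtain ⟨a, b, c, d, h, rfl⟩ := exists_mkg g
  by_cases hg : c = 0
  · have h1 : mkg a b c d h * ww ∈ P := by
      rw [hww, mkg_mul]
      apply hc
      rintro h'
      have : d = 0 := by linear_combination h'
      subst hg this
      simp at h
      exact absurd h (by decide)
    have h2 : mkg a b c d h = (mkg a b c d h * ww) * ww * ww * ww := by
      have : ww * (ww * (ww * ww)) = 1 := by decide
      simp only [mul_assoc]
      rw [this, mul_one]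
    rw [h2]
    exact mul_mem (mul_mem (mul_mem h1 hw) hw) hw
  · exact hc _ _ _ _ _ hg

/-! ### Fifth roots of unity and the representation `psi` -/

def ee : ℂ := Complex.exp (2 * Real.pi * Complex.I / (5 : ℕ))

theorem ee_prim : IsPrimitiveRoot ee 5 := Complex.isPrimitiveRoot_exp 5 (by norm_num)

theorem ee_pow : ee ^ 5 = 1 := ee_prim.pow_eq_one

theorem ee_sum : 1 + ee + ee ^ 2 + ee ^ 3 + ee ^ 4 = 0 := by
  have := ee_prim.geom_sum_eq_zero (by norm_num)
  simpa [Finset.sum_range_succ] using this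

def EE (k : ZMod 5) : ℂ := ee ^ k.val

theorem EE_add (k l : ZMod 5) : EE (k + l) = EE k * EE l := by
  unfold EE
  rw [← pow_add, ZMod.val_add, ← pow_mod_orderOf ee (k.val + l.val), ← ee_prim.eq_orderOf]

theorem EE_zero : EE 0 = 1 := by simp [EE]
theorem EE_one : EE 1 = ee := pow_one ee
theorem EE_two : EE 2 = ee ^ 2 := rfl
theorem EE_three : EE 3 = ee ^ 3 := rfl
theorem EE_four : EE 4 = ee ^ 4 := rfl

theorem EE_ne (k : ZMod 5) : EE k ≠ 0 := pow_ne_zero _ (ee_prim.ne_zero (by norm_num))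

theorem EE_inj {k : ZMod 5} (h : EE k = 1) : k = 0 := by
  have h2 := (ee_prim.pow_eq_one_iff_dvd k.val).1 h
  have h3 := ZMod.val_lt k
  exact (ZMod.val_eq_zero k).1 (Nat.eq_zero_of_dvd_of_lt h2 h3)

theorem exists_EE {z : ℂ} (h : z ^ 5 = 1) : ∃ k, z = EE k := by
  obtain ⟨i, hi, rfl⟩ := ee_prim.eq_pow_of_pow_eq_one h
  refine ⟨(i : ZMod 5), ?_⟩
  unfold EE
  rw [ZMod.val_natCast, Nat.mod_eq_of_lt hi]

theorem EE_pow_five (k : ZMod 5) : EE k ^ 5 = 1 := by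
  unfold EE
  rw [← pow_mul, mul_comm, pow_mul, ee_pow, one_pow]

def ev (v : ZMod 5 → ℤ) : ℂ :=
  v 0 + v 1 * ee + v 2 * ee ^ 2 + v 3 * ee ^ 3 + v 4 * ee ^ 4

theorem ev_cnv (v w : ZMod 5 → ℤ) : ev (cnv v w) = ev v * ev w := by
  have e : ∀ a b c : ZMod 5, a - b = c → w (a - b) = w c := by intro a b c h; rw [h]
  have h1 : (0 - 1 : ZMod 5) = 4 := by decide
  have h2 : (0 - 2 : ZMod 5) = 3 := by decide
  have h3 : (0 - 3 : ZMod 5) = 2 := by decide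
  have h4 : (0 - 4 : ZMod 5) = 1 := by decide
  have h5 : (1 - 1 : ZMod 5) = 0 := by decide
  have h6 : (1 - 2 : ZMod 5) = 4 := by decide
  have h7 : (1 - 3 : ZMod 5) = 3 := by decide
  have h8 : (1 - 4 : ZMod 5) = 2 := by decide
  have h9 : (2 - 1 : ZMod 5) = 1 := by decide
  have h10 : (2 - 2 : ZMod 5) = 0 := by decide
  have h11 : (2 - 3 : ZMod 5) = 4 := by decide
  have h12 : (2 - 4 : ZMod 5) = 3 := by decide
  have h13 : (3 - 1 : ZMod 5) = 2 := by decide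
  have h14 : (3 - 2 : ZMod 5) = 1 := by decide
  have h15 : (3 - 3 : ZMod 5) = 0 := by decide
  have h16 : (3 - 4 : ZMod 5) = 4 := by decide
  have h17 : (4 - 1 : ZMod 5) = 3 := by decide
  have h18 : (4 - 2 : ZMod 5) = 2 := by decide
  have h19 : (4 - 3 : ZMod 5) = 1 := by decide
  have h20 : (4 - 4 : ZMod 5) = 0 := by decide
  unfold ev cnv
  rw [h1, h2, h3, h4, h5, h6, h7, h8, h9, h10, h11, h12, h13, h14, h15, h16, h17, h18, h19, h20]
  push_cast
  generalize (v 0 : ℂ) = v0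
  generalize (v 1 : ℂ) = v1
  generalize (v 2 : ℂ) = v2
  generalize (v 3 : ℂ) = v3
  generalize (v 4 : ℂ) = v4
  generalize (w 0 : ℂ) = w0
  generalize (w 1 : ℂ) = w1
  generalize (w 2 : ℂ) = w2
  generalize (w 3 : ℂ) = w3
  generalize (w 4 : ℂ) = w4
  linear_combination -(v1 * w4 + v2 * w3 + v3 * w2 + v4 * w1 + ee * (v2 * w4 + v3 * w3 + v4 * w2)
    + ee ^ 2 * (v3 * w4 + v4 * w3) + ee ^ 3 * (v4 * w4)) * ee_pow

theorem ev_const (v : ZMod 5 → ℤ) (h : ∀ k, v k = v 0) : ev v = 0 := by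
  unfold ev
  rw [h 1, h 2, h 3, h 4]
  linear_combination (v 0 : ℂ) * ee_sum

theorem ev_dfct (a b c d a' b' c' d' x y : ZMod 5)
    (h : ∀ k, dfct a b c d a' b' c' d' x y k = dfct a b c d a' b' c' d' x y 0) :
    5 * ev (ent (a * a' + b * c') (a * b' + b * d') (c * a' + d * c') (c * b' + d * d') x y)
     = ev (ent a b c d x 1) * ev (ent a' b' c' d' 1 y)
      + ev (ent a b c d x 3) * ev (ent a' b' c' d' 3 y) := by
  have := ev_const _ h
  rw [← ev_cnv, ← ev_cnv]
  unfold ev dfct at this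
  push_cast at this
  unfold ev
  linear_combination this

/-- the representation as a function of the entries -/
def pm (a b c d : ZMod 5) : Matrix (Fin 2) (Fin 2) ℂ :=
  !![ev (ent a b c d 1 1) / 5, ev (ent a b c d 1 3) / 5;
     ev (ent a b c d 3 1) / 5, ev (ent a b c d 3 3) / 5]

theorem pm_mul (a b c d a' b' c' d' : ZMod 5)
    (h : ∀ x ∈ [(1 : ZMod 5), 3], ∀ y ∈ [(1 : ZMod 5), 3], ∀ k,
      dfct a b c d a' b' c' d' x y k = dfct a b c d a' b' c' d' x y 0) :
    pm (a * a' + b * c') (a * b' + b * d') (c * a' + d * c') (c * b' + d * d') =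
    pm a b c d * pm a' b' c' d' := by
  have h11 := ev_dfct _ _ _ _ _ _ _ _ _ _ (h 1 (by simp) 1 (by simp))
  have h13 := ev_dfct _ _ _ _ _ _ _ _ _ _ (h 1 (by simp) 3 (by simp))
  have h31 := ev_dfct _ _ _ _ _ _ _ _ _ _ (h 3 (by simp) 1 (by simp))
  have h33 := ev_dfct _ _ _ _ _ _ _ _ _ _ (h 3 (by simp) 3 (by simp))
  unfold pm
  rw [Matrix.mul_fin_two]
  have e : ∀ X A B C D : ℂ, 5 * X = A * B + C * D → X / 5 = A / 5 * (B / 5) + C / 5 * (D / 5) := by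
    intro X A B C D h
    linear_combination h / 25
  rw [e _ _ _ _ _ h11, e _ _ _ _ _ h13, e _ _ _ _ _ h31, e _ _ _ _ _ h33]

def pf (g : SL25) : Matrix (Fin 2) (Fin 2) ℂ :=
  pm ((g : Matrix (Fin 2) (Fin 2) (ZMod 5)) 0 0) ((g : Matrix (Fin 2) (Fin 2) (ZMod 5)) 0 1)
    ((g : Matrix (Fin 2) (Fin 2) (ZMod 5)) 1 0) ((g : Matrix (Fin 2) (Fin 2) (ZMod 5)) 1 1)

theorem pf_mkg (a b c d h) : pf (mkg a b c d h) = pm a b c d := rfl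

theorem ev_sum (v : ZMod 5 → ℤ) : ev v = ∑ k : ZMod 5, (v k : ℂ) * EE k := by
  have := Fin.sum_univ_five (fun k : Fin 5 => ((v k : ℤ) : ℂ) * EE k)
  refine Eq.trans ?_ this.symm
  have h0 : EE (0 : Fin 5) = 1 := EE_zero
  have h1 : EE (1 : Fin 5) = ee := EE_one
  have h2 : EE (2 : Fin 5) = ee ^ 2 := rfl
  have h3 : EE (3 : Fin 5) = ee ^ 3 := rfl
  have h4 : EE (4 : Fin 5) = ee ^ 4 := rfl
  rw [h0, h1, h2, h3, h4, mul_one]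
  rfl

theorem ent_zero (a b d x y : ZMod 5) : ev (ent a b 0 d x y) =
    ((5 * chi a * ((if a * x = y then 1 else 0) - (if a * x = -y then 1 else 0)) : ℤ) : ℂ) *
      EE (a * b * x * x * 3) := by
  have : ∀ k, ent a b 0 d x y k = if k = a * b * x * x * 3 then
      5 * chi a * ((if a * x = y then 1 else 0) - (if a * x = -y then 1 else 0)) else 0 := by
    intro k; unfold ent; rw [if_pos rfl]
  rw [ev_sum]
  simp only [this]
  generalize 5 * chi a * ((if a * x = y then 1 else 0) - (if a * x = -y then 1 else 0)) = C
  rw [Finset.sum_eq_single (a * b * x * x * 3)]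
  · rw [if_pos rfl]
  · intro k _ hk
    rw [if_neg hk]; simp
  · simp

/-- a square root of five -/
def s5 : ℂ := ee - ee ^ 2 - ee ^ 3 + ee ^ 4

theorem s5_sq : s5 ^ 2 = 5 := by
  unfold s5
  linear_combination (4 + ee ^ 3 - 2 * ee ^ 2 - ee) * ee_pow - ee_sum

theorem s5_ne : s5 ≠ 0 := by
  intro h
  have := s5_sq
  rw [h] at this
  norm_num at this

theorem ev_chi (m : ZMod 5) : ∑ k : ZMod 5, (chi (k - m) : ℂ) * EE k = s5 * EE m := by
  have h0 : s5 = ev chi := by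
    unfold s5 ev
    rw [show chi 0 = 0 from rfl, show chi 1 = 1 from rfl, show chi 2 = -1 from rfl,
      show chi 3 = -1 from rfl, show chi 4 = 1 from rfl]
    push_cast; ring
  rw [h0, ev_sum, Finset.sum_mul, ← Equiv.sum_comp (Equiv.addRight m)]
  apply Finset.sum_congr rfl
  intro k _
  rw [Equiv.coe_addRight, add_sub_cancel_right, EE_add, mul_assoc]

theorem ent_ne (a b c d x y : ZMod 5) (hc : c ≠ 0) : ev (ent a b c d x y) =
    chi c * s5 * EE ((a * x * x + d * y * y) * 3 * (c * c * c)) *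
      (EE (x * y * (c * c * c)) - EE (- (x * y * (c * c * c)))) := by
  set m := (a * x * x + d * y * y) * 3 * (c * c * c) with hm
  set n := x * y * (c * c * c) with hn
  have : ∀ k, ent a b c d x y k = chi c * (chi (k - (m + n)) - chi (k - (m + -n))) := by
    intro k; unfold ent; rw [if_neg hc]
    simp only [← hm, ← hn]
    rw [sub_sub, show k - m + n = k - (m + -n) by ring]
  rw [ev_sum]
  simp only [this]
  push_cast
  simp only [mul_sub, sub_mul, mul_assoc, Finset.sum_sub_distrib, ← Finset.mul_sum]
  rw [ev_chi, ev_chi, EE_add, EE_add]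

theorem mat2_congr {a b c d a' b' c' d' : ℂ} (h1 : a = a') (h2 : b = b') (h3 : c = c')
    (h4 : d = d') : !![a, b; c, d] = !![a', b'; c', d'] := by
  rw [h1, h2, h3, h4]

theorem pm_u (t : ZMod 5) : pm 1 t 0 1 = !![EE (3 * t), 0; 0, EE (2 * t)] := by
  unfold pm
  simp only [ent_zero]
  have e1 : 1 * t * 1 * 1 * 3 = 3 * t := by ring
  have e2 : 1 * t * 3 * 3 * 3 = 2 * t := by
    have : (25 : ZMod 5) = 0 := by decide
    linear_combination t * this
  rw [e1, e2, show chi 1 = 1 from rfl]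
  rw [if_pos (by decide), if_neg (by decide), if_neg (by decide), if_neg (by decide),
    if_neg (by decide), if_neg (by decide), if_pos (by decide), if_neg (by decide)]
  push_cast
  apply mat2_congr <;> ring

theorem pm_h : pm 2 0 0 3 = !![0, 1; -1, 0] := by
  unfold pm
  simp only [ent_zero]
  rw [show chi 2 = -1 from rfl]
  rw [if_neg (by decide), if_neg (by decide), if_neg (by decide), if_pos (by decide),
    if_pos (by decide), if_neg (by decide), if_neg (by decide), if_neg (by decide)]
  simp [EE_zero]

theorem pm_neg : pm 4 0 0 4 = !![-1, 0; 0, -1] := by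
  unfold pm
  simp only [ent_zero]
  rw [show chi 4 = 1 from rfl]
  rw [if_neg (by decide), if_pos (by decide), if_neg (by decide), if_neg (by decide),
    if_neg (by decide), if_neg (by decide), if_neg (by decide), if_pos (by decide)]
  simp [EE_zero]

def wa : ℂ := s5 / 5 * (ee - ee ^ 4)
def wb : ℂ := s5 / 5 * (ee ^ 3 - ee ^ 2)

theorem pm_w : pm 0 4 1 0 = !![wa, wb; wb, -wa] := by
  have h1 : (1 : ZMod 5) ≠ 0 := by decide
  unfold pm
  rw [ent_ne _ _ _ _ _ _ h1, ent_ne _ _ _ _ _ _ h1, ent_ne _ _ _ _ _ _ h1, ent_ne _ _ _ _ _ _ h1]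
  rw [show chi 1 = 1 from rfl]
  rw [show ((0 * 1 * 1 + 0 * 1 * 1) * 3 * (1 * 1 * 1) : ZMod 5) = 0 by decide,
    show ((0 * 1 * 1 + 0 * 3 * 3) * 3 * (1 * 1 * 1) : ZMod 5) = 0 by decide,
    show ((0 * 3 * 3 + 0 * 1 * 1) * 3 * (1 * 1 * 1) : ZMod 5) = 0 by decide,
    show ((0 * 3 * 3 + 0 * 3 * 3) * 3 * (1 * 1 * 1) : ZMod 5) = 0 by decide,
    show (-(1 * 1 * (1 * 1 * 1)) : ZMod 5) = 4 by decide,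
    show (1 * 1 * (1 * 1 * 1) : ZMod 5) = 1 by decide,
    show (-(1 * 3 * (1 * 1 * 1)) : ZMod 5) = 2 by decide,
    show (1 * 3 * (1 * 1 * 1) : ZMod 5) = 3 by decide,
    show (-(3 * 1 * (1 * 1 * 1)) : ZMod 5) = 2 by decide,
    show (3 * 1 * (1 * 1 * 1) : ZMod 5) = 3 by decide,
    show (-(3 * 3 * (1 * 1 * 1)) : ZMod 5) = 1 by decide,
    show (3 * 3 * (1 * 1 * 1) : ZMod 5) = 4 by decide]
  rw [EE_zero, EE_one, EE_two, EE_three, EE_four]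
  unfold wa wb
  push_cast
  apply mat2_congr <;> ring

theorem pf_one : pf 1 = 1 := by
  have : pf 1 = pm 1 0 0 1 := rfl
  rw [this, pm_u, mul_zero, mul_zero, EE_zero, Matrix.one_fin_two]

theorem pf_mul (g h : SL25) : pf (g * h) = pf g * pf h := by
  have key := SL25_gen
    { carrier := {h | ∀ g, pf (g * h) = pf g * pf h}
      one_mem' := by intro g; rw [mul_one, pf_one, mul_one]
      mul_mem' := by
        intro a b ha hb g
        rw [← mul_assoc, hb, ha, hb, mul_assoc] } ?_ ?_ h
  · exact key g
  · intro g
    obtain ⟨a, b, c, d, h, rfl⟩ := exists_mkg g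
    rw [show uu = mkg 1 1 0 1 (by ring) from rfl, mkg_mul, pf_mkg, pf_mkg, pf_mkg]
    exact pm_mul _ _ _ _ _ _ _ _ (dfct_u a b c d h)
  · intro g
    obtain ⟨a, b, c, d, h, rfl⟩ := exists_mkg g
    rw [show ww = mkg 0 4 1 0 (by decide) from rfl, mkg_mul, pf_mkg, pf_mkg, pf_mkg]
    exact pm_mul _ _ _ _ _ _ _ _ (dfct_w a b c d h)

theorem wab_sq : wa ^ 2 + wb ^ 2 = -1 := by
  unfold wa wb
  have : (ee - ee ^ 4) ^ 2 + (ee ^ 3 - ee ^ 2) ^ 2 = -5 := by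
    linear_combination ee_sum + (-4 + ee ^ 3 + ee) * ee_pow
  linear_combination s5 ^ 2 / 25 * this + (-1/5) * s5_sq

theorem wab_diff : wb ^ 2 - wa ^ 2 = s5 / 5 := by
  unfold wa wb
  have : (ee ^ 3 - ee ^ 2) ^ 2 - (ee - ee ^ 4) ^ 2  = s5 := by
    unfold s5
    linear_combination (-ee ^ 3 + ee) * ee_pow
  linear_combination s5 ^ 2 / 25 * this + s5 / 25 * s5_sq

theorem wab_mul : wa * wb = s5 / 5 := by
  unfold wa wb
  have : (ee - ee ^ 4) * (ee ^ 3 - ee ^ 2)  = s5 := by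
    unfold s5
    linear_combination (-ee ^ 2 + ee) * ee_pow
  linear_combination s5 ^ 2 / 25 * this + s5 / 25 * s5_sq

theorem pf_det (g : SL25) : (pf g).det = 1 := by
  refine SL25_gen
    { carrier := {h | (pf h).det = 1}
      one_mem' := by
        show (pf 1).det = 1
        rw [pf_one, Matrix.det_one]
      mul_mem' := by
        intro a b ha hb
        show (pf (a * b)).det = 1
        rw [pf_mul, Matrix.det_mul]
        rw [show (pf a).det = 1 from ha, show (pf b).det = 1 from hb, mul_one] } ?_ ?_ g
  · show (pm 1 1 0 1).det = 1
    rw [pm_u, Matrix.det_fin_two_of, ← EE_add, show (3 * 1 + 2 * 1 : ZMod 5) = 0 by decide, EE_zero]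
    ring
  · show (pm 0 4 1 0).det = 1
    rw [pm_w, Matrix.det_fin_two_of]
    linear_combination - wab_sq

theorem pf_inj (g : SL25) (h : pf g = 1) : g = 1 := by
  obtain ⟨a, b, c, d, hg, rfl⟩ := exists_mkg g
  rw [pf_mkg] at h
  have h01 : ev (ent a b c d 1 3) / 5 = 0 := congrFun (congrFun h 0) 1
  have h00 : ev (ent a b c d 1 1) / 5 = 1 := congrFun (congrFun h 0) 0
  by_cases hc : c = 0
  · subst hc
    rw [ent_zero] at h00
    have ha : a = 0 ∨ a = 1 ∨ a = 2 ∨ a = 3 ∨ a = 4 := 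
      (by decide : ∀ a : ZMod 5, a = 0 ∨ a = 1 ∨ a = 2 ∨ a = 3 ∨ a = 4) a
    rcases ha with rfl | rfl | rfl | rfl | rfl
    · exfalso
      simp [show chi 0 = 0 from rfl] at h00
    · rw [if_pos (by decide), if_neg (by decide), show chi 1 = 1 from rfl] at h00
      have h3 : EE (1 * b * 1 * 1 * 3) = 1 := by
        push_cast at h00
        linear_combination h00
      have h4 := EE_inj h3
      have h5 : ∀ b d : ZMod 5, 1 * b * 1 * 1 * 3 = 0 → 1 * d - b * 0 = 1 → b = 0 ∧ d = 1 := by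
        decide
      obtain ⟨rfl, rfl⟩ := h5 b d h4 hg
      apply Subtype.ext
      exact Matrix.one_fin_two.symm
    · exfalso
      rw [if_neg (by decide), if_neg (by decide)] at h00
      simp at h00
    · exfalso
      rw [if_neg (by decide), if_neg (by decide)] at h00
      simp at h00
    · exfalso
      rw [if_neg (by decide), if_pos (by decide), show chi 4 = 1 from rfl] at h00
      have h3 : EE (4 * b * 1 * 1 * 3) = -1 := by
        push_cast at h00
        linear_combination -h00
      have h4 := EE_pow_five (4 * b * 1 * 1 * 3)
      rw [h3] at h4
      norm_num at h4
  · exfalso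
    rw [ent_ne _ _ _ _ _ _ hc] at h01
    have h1 : (chi c : ℂ) ≠ 0 := by
      have : ∀ c : ZMod 5, c ≠ 0 → chi c ≠ 0 := by decide
      exact_mod_cast this c hc
    have h2 : EE (1 * 3 * (c * c * c)) - EE (-(1 * 3 * (c * c * c))) ≠ 0 := by
      intro h
      generalize hn : 1 * 3 * (c * c * c) = n at h
      have h3 : EE (n + n) = 1 := by
        rw [EE_add]
        nth_rewrite 1 [sub_eq_zero.1 h]
        rw [← EE_add, neg_add_cancel, EE_zero]
      have h4 := EE_inj h3
      have : ∀ c : ZMod 5, 1 * 3 * (c * c * c) + 1 * 3 * (c * c * c) = 0 → c = 0 := by decide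
      rw [← hn] at h4
      exact hc (this c h4)
    have h3 := mul_ne_zero (mul_ne_zero (mul_ne_zero h1 s5_ne)
      (EE_ne ((a * 1 * 1 + d * 3 * 3) * 3 * (c * c * c)))) h2
    exact h3 (by linear_combination 5 * h01)

/-! ### The binary forms of degree 20 and 12 -/

/-- the form `F₂₀` -/
def Fn (x y : ℂ) : ℂ :=
  x ^ 20 - 228 * (x ^ 15 * y ^ 5 - x ^ 5 * y ^ 15) + 494 * x ^ 10 * y ^ 10 + y ^ 20

/-- the vertex form of degree 12 -/
def fn (x y : ℂ) : ℂ := x * y * (x ^ 10 + 11 * x ^ 5 * y ^ 5 - y ^ 10)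

def Inv2 (B : Matrix (Fin 2) (Fin 2) ℂ) : Prop :=
  ∀ x y, Fn (B 0 0 * x + B 0 1 * y) (B 1 0 * x + B 1 1 * y) = Fn x y

theorem Inv2_mul {A B : Matrix (Fin 2) (Fin 2) ℂ} (hA : Inv2 A) (hB : Inv2 B) : Inv2 (A * B) := by
  intro x y
  rw [← hB x y, ← hA (B 0 0 * x + B 0 1 * y) (B 1 0 * x + B 1 1 * y)]
  simp only [Matrix.mul_apply, Fin.sum_univ_two]
  congr 1 <;> ring

theorem Inv2_one : Inv2 1 := by
  intro x y
  simp

theorem Inv2_smul {A : Matrix (Fin 2) (Fin 2) ℂ} (hA : Inv2 A) {z : ℂ} (hz : z ^ 20 = 1) :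
    Inv2 (z • A) := by
  intro x y
  rw [← hA x y]
  simp only [Matrix.smul_apply, smul_eq_mul]
  unfold Fn
  generalize A 0 0 = a
  generalize A 0 1 = b
  generalize A 1 0 = c
  generalize A 1 1 = d
  have h1 : z * a * x + z * b * y = z * (a * x + b * y) := by ring
  have h2 : z * c * x + z * d * y = z * (c * x + d * y) := by ring
  rw [h1, h2]
  generalize a * x + b * y = X
  generalize c * x + d * y = Y
  linear_combination (X ^ 20 - 228 * (X ^ 15 * Y ^ 5 - X ^ 5 * Y ^ 15) + 494 * X ^ 10 * Y ^ 10
    + Y ^ 20) * hz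

theorem Fn_w (a b r x y : ℂ) (h1 : a ^ 2 + b ^ 2 = -1) (h2 : b ^ 2 - a ^ 2 = r) (h3 : a * b = r)
    (h4 : 5 * r ^ 2 = 1) : Fn (a * x + b * y) (b * x - a * y) = Fn x y := by
  have ha : a ^ 2 = (-1 - r) / 2 := by linear_combination (h1 - h2) / 2
  have hb : b ^ 2 = (-1 + r) / 2 := by linear_combination (h1 + h2) / 2
  have hp : (a * x + b * y) ^ 2 = (-(x ^ 2 + y ^ 2) + r * (-x ^ 2 + 4 * x * y + y ^ 2)) / 2 := by
    linear_combination x ^ 2 * ha + y ^ 2 * hb + 2 * x * y * h3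
  have hq : (b * x - a * y) ^ 2 = (-(x ^ 2 + y ^ 2) - r * (-x ^ 2 + 4 * x * y + y ^ 2)) / 2 := by
    linear_combination x ^ 2 * hb + y ^ 2 * ha - 2 * x * y * h3
  have hu : (a * x + b * y) * (b * x - a * y) = r * (x ^ 2 + x * y - y ^ 2) := by
    linear_combination (x ^ 2 - y ^ 2) * h3 + x * y * h2
  generalize a * x + b * y = l at *
  generalize b * x - a * y = m at *
  have hF : Fn l m = (((l ^ 2) ^ 5 - (m ^ 2) ^ 5) ^ 2
      - 228 * (l * m) ^ 5 * ((l ^ 2) ^ 5 - (m ^ 2) ^ 5) + 496 * (l * m) ^ 10) := by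
    unfold Fn; ring
  rw [hF, hp, hq, hu]
  have hA : ∃ A, A = -(x ^ 2 + y ^ 2) := ⟨_, rfl⟩
  have hB : ∃ A, A = -x ^ 2 + 4 * x * y + y ^ 2 := ⟨_, rfl⟩
  have hU : ∃ A, A = x ^ 2 + x * y - y ^ 2 := ⟨_, rfl⟩
  obtain ⟨A, hA⟩ := hA
  obtain ⟨B, hB⟩ := hB
  obtain ⟨U, hU⟩ := hU
  rw [← hA, ← hB, ← hU]
  have hr2 : r ^ 2 = 1 / 5 := by linear_combination h4 / 5
  have hD : ((A + r * B) / 2) ^ 5 - ((A - r * B) / 2) ^ 5 =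
      r * ((5 * A ^ 4 * B + 2 * A ^ 2 * B ^ 3 + B ^ 5 / 25) / 16) := by
    have : ((A + r * B) / 2) ^ 5 - ((A - r * B) / 2) ^ 5 =
      r * ((5 * A ^ 4 * B + 10 * r ^ 2 * A ^ 2 * B ^ 3 + (r ^ 2) ^ 2 * B ^ 5) / 16) := by ring
    rw [this, hr2]; ring
  rw [hD]
  have h10 : (r * U) ^ 10 = U ^ 10 / 3125 := by
    have : (r * U) ^ 10 = (r ^ 2) ^ 5 * U ^ 10 := by ring
    rw [this, hr2]; ring
  have h5 : (r * U) ^ 5 = r * U ^ 5 / 25 := by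
    have : (r * U) ^ 5 = (r ^ 2) ^ 2 * (r * U ^ 5) := by ring
    rw [this, hr2]; ring
  rw [h10, h5]
  generalize hDD : (5 * A ^ 4 * B + 2 * A ^ 2 * B ^ 3 + B ^ 5 / 25) / 16 = D
  have : (r * D) ^ 2 - 228 * (r * U ^ 5 / 25) * (r * D) + 496 * (U ^ 10 / 3125)
    = r ^ 2 * (D ^ 2 - 228 * (U ^ 5 / 25) * D) + 496 * (U ^ 10 / 3125) := by ring
  rw [this, hr2, ← hDD, hA, hB, hU]
  unfold Fn
  ring

theorem pf_inv (g : SL25) : Inv2 (pf g) := by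
  refine SL25_gen
    { carrier := {h | Inv2 (pf h)}
      one_mem' := by
        show Inv2 (pf 1)
        rw [pf_one]; exact Inv2_one
      mul_mem' := by
        intro a b ha hb
        show Inv2 (pf (a * b))
        rw [pf_mul]
        exact Inv2_mul ha hb } ?_ ?_ g
  · show Inv2 (pm 1 1 0 1)
    rw [pm_u, show (3 * 1 : ZMod 5) = 3 by decide, show (2 * 1 : ZMod 5) = 2 by decide, EE_two,
      EE_three]
    intro x y
    simp only [Matrix.of_apply, Matrix.cons_val', Matrix.cons_val_zero, Matrix.cons_val_one,
      Matrix.cons_val_fin_one, zero_mul, add_zero, zero_add]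
    have h1 : (ee ^ 3 * x) ^ 5 = x ^ 5 := by
      have : (ee ^ 3 * x) ^ 5 = (ee ^ 5) ^ 3 * x ^ 5 := by ring
      rw [this, ee_pow]; ring
    have h2 : (ee ^ 2 * y) ^ 5 = y ^ 5 := by
      have : (ee ^ 2 * y) ^ 5 = (ee ^ 5) ^ 2 * y ^ 5 := by ring
      rw [this, ee_pow]; ring
    have hF : ∀ l m, Fn l m = (l ^ 5) ^ 4 - 228 * ((l ^ 5) ^ 3 * m ^ 5 - l ^ 5 * (m ^ 5) ^ 3)
      + 494 * (l ^ 5) ^ 2 * (m ^ 5) ^ 2 + (m ^ 5) ^ 4 := by intro l m; unfold Fn; ring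
    rw [hF, h1, h2, hF]
  · show Inv2 (pm 0 4 1 0)
    rw [pm_w]
    intro x y
    simp only [Matrix.of_apply, Matrix.cons_val', Matrix.cons_val_zero, Matrix.cons_val_one,
      Matrix.cons_val_fin_one]
    rw [show wb * x + -wa * y = wb * x - wa * y by ring]
    exact Fn_w _ _ (s5 / 5) x y wab_sq wab_diff wab_mul (by linear_combination s5_sq / 5)

/-! Transitivity on the zeros of `fn`. -/

def hh : SL25 := mkg 2 0 0 3 (by decide)

theorem pf_hh : pf hh = !![0, 1; -1, 0] := pm_h

theorem s1_rel : (ee + ee ^ 4) ^ 2 + (ee + ee ^ 4) - 1 = 0 := by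
  linear_combination ee_sum + (ee ^ 3 + 2) * ee_pow

theorem s2_eq : ee ^ 2 + ee ^ 3 = - 1 - (ee + ee ^ 4) := by
  linear_combination ee_sum

theorem fn_factor (x y s : ℂ) (h : s ^ 2 + s - 1 = 0) : x ^ 10 + 11 * x ^ 5 * y ^ 5 - y ^ 10 =
    (x ^ 5 - (s * y) ^ 5) * (x ^ 5 - ((-1 - s) * y) ^ 5) := by
  have h5 : s ^ 5 = 5 * s - 3 := by
    linear_combination (s ^ 3 - s ^ 2 + 2 * s - 3) * h
  have h5' : (-1 - s) ^ 5 = -5 * s - 8 := by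
    linear_combination -(s ^ 3 + 4 * s ^ 2 + 7 * s + 7) * h
  rw [mul_pow, mul_pow, h5, h5']
  linear_combination 25 * y ^ 10 * h

theorem wb_ne : wb ≠ 0 := by
  intro h
  have := wab_mul
  rw [h, mul_zero] at this
  exact s5_ne (by linear_combination -5 * this)

theorem wa_ne : wa ≠ 0 := by
  intro h
  have := wab_mul
  rw [h, zero_mul] at this
  exact s5_ne (by linear_combination -5 * this)

theorem wab_rel : wa = (-1 - (ee + ee ^ 4)) * wb := by
  rw [← s2_eq]
  unfold wa wb
  linear_combination -s5 / 5 * ee * ee_pow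

theorem wab_rel' : wb = -(ee + ee ^ 4) * wa := by
  rw [wab_rel]
  linear_combination -wb * s1_rel

theorem fn_trans (p q : ℂ) (h0 : p ≠ 0 ∨ q ≠ 0) (h : fn p q = 0) :
    ∃ (g : SL25) (l : ℂ), p = l * pf g 0 0 ∧ q = l * pf g 1 0 := by
  by_cases hq : q = 0
  · refine ⟨1, p, ?_, ?_⟩ <;> rw [pf_one] <;> simp [hq]
  by_cases hp : p = 0
  · refine ⟨hh, -q, ?_, ?_⟩ <;> rw [pf_hh] <;> simp [hp]
  have hf : p ^ 10 + 11 * p ^ 5 * q ^ 5 - q ^ 10 = 0 := by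
    unfold fn at h
    exact (mul_eq_zero.1 h).resolve_left (mul_ne_zero hp hq)
  rw [fn_factor p q _ s1_rel] at hf
  have key : ∀ s : ℂ, s ≠ 0 → p ^ 5 - (s * q) ^ 5 = 0 → ∃ k, p = EE k * (s * q) := by
    intro s hs h
    have hsq := mul_ne_zero hs hq
    have : (p / (s * q)) ^ 5 = 1 := by
      rw [div_pow, div_eq_one_iff_eq (pow_ne_zero _ hsq)]
      exact sub_eq_zero.1 h
    obtain ⟨k, hk⟩ := exists_EE this
    exact ⟨k, by rw [← hk]; field_simp⟩
  have hs1 : ee + ee ^ 4 ≠ 0 := by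
    intro h
    have := s1_rel
    rw [h] at this
    norm_num at this
  have hs2 : -1 - (ee + ee ^ 4) ≠ 0 := by
    intro h
    have := wab_rel
    rw [h, zero_mul] at this
    exact wa_ne this
  have hE : ∀ k : ZMod 5, EE (3 * k) = EE k * EE (2 * k) := by
    intro k; rw [← EE_add]; congr 1; ring
  rcases mul_eq_zero.1 hf with hf | hf
  · obtain ⟨k, hk⟩ := key _ hs1 hf
    refine ⟨mkg 1 k 0 1 (by ring) * ww * hh, q / (EE (2 * k) * wa), ?_, ?_⟩ <;>
    rw [pf_mul, pf_mul, pf_hh, pf_mkg, show pf ww = pm 0 4 1 0 from rfl, pm_u, pm_w,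
        Matrix.mul_fin_two, Matrix.mul_fin_two] <;> simp
    · have h1 := wa_ne
      have h2 := EE_ne (2 * k)
      rw [hE, hk]
      field_simp
      linear_combination EE k * wab_rel'
    · have h1 := wa_ne
      have h2 := EE_ne (2 * k)
      field_simp
  · obtain ⟨k, hk⟩ := key _ hs2 hf
    refine ⟨mkg 1 k 0 1 (by ring) * ww, q / (EE (2 * k) * wb), ?_, ?_⟩ <;>
    rw [pf_mul, pf_mkg, show pf ww = pm 0 4 1 0 from rfl, pm_u, pm_w,
        Matrix.mul_fin_two] <;> simp
    · have h1 := wb_ne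
      have h2 := EE_ne (2 * k)
      rw [hE, hk]
      field_simp
      linear_combination -EE k * wab_rel
    · have h1 := wb_ne
      have h2 := EE_ne (2 * k)
      field_simp

/-! ### Proportionality of `G ∘ A` and `G` -/

def Gn (x y z : ℂ) : ℂ := z ^ 20 + Fn x y

/-- the same form evaluated at polynomials. -/
def GP (x y z : Polynomial ℂ) : Polynomial ℂ :=
  z ^ 20 + (x ^ 20 - 228 * (x ^ 15 * y ^ 5 - x ^ 5 * y ^ 15) + 494 * x ^ 10 * y ^ 10 + y ^ 20)

theorem GP_eval (x y z : Polynomial ℂ) (t : ℂ) :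
    (GP x y z).eval t = Gn (x.eval t) (y.eval t) (z.eval t) := by
  unfold GP Gn Fn
  simp

theorem sub_deg {p q : Polynomial ℂ} {n : ℕ} (hp : p.natDegree ≤ n) (hq : q.natDegree ≤ n) :
    (p - q).natDegree ≤ n :=
  (Polynomial.natDegree_sub_le p q).trans (max_le hp hq)

theorem lin_deg (u a : ℂ) : (Polynomial.C u + Polynomial.C a * Polynomial.X : Polynomial ℂ).natDegree ≤ 1 := by compute_degree

theorem lin_pow_coeff (u a : ℂ) (n : ℕ) : ((Polynomial.C u + Polynomial.C a * Polynomial.X : Polynomial ℂ) ^ n).natDegree ≤ n ∧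
    ((Polynomial.C u + Polynomial.C a * Polynomial.X : Polynomial ℂ) ^ n).coeff n = a ^ n := by
  constructor
  · simpa using Polynomial.natDegree_pow_le_of_le n (lin_deg u a)
  · have := Polynomial.coeff_pow_of_natDegree_le (lin_deg u a) (m := n)
    simpa using this

theorem lin_mul_coeff (u a v b : ℂ) (m n : ℕ) :
    ((Polynomial.C u + Polynomial.C a * Polynomial.X : Polynomial ℂ) ^ m * (Polynomial.C v + Polynomial.C b * Polynomial.X) ^ n).natDegree ≤ m + n ∧
    ((Polynomial.C u + Polynomial.C a * Polynomial.X : Polynomial ℂ) ^ m * (Polynomial.C v + Polynomial.C b * Polynomial.X) ^ n).coeff (m + n) = a ^ m * b ^ n := by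
  obtain ⟨h1, h2⟩ := lin_pow_coeff u a m
  obtain ⟨h3, h4⟩ := lin_pow_coeff v b n
  constructor
  · exact Polynomial.natDegree_mul_le_of_le h1 h3
  · rw [Polynomial.coeff_mul_add_eq_of_natDegree_le h1 h3, h2, h4]

theorem GP_lin (u a v b w c : ℂ) :
    (GP (Polynomial.C u + Polynomial.C a * Polynomial.X) (Polynomial.C v + Polynomial.C b * Polynomial.X) (Polynomial.C w + Polynomial.C c * Polynomial.X)).natDegree ≤ 20 ∧
    (GP (Polynomial.C u + Polynomial.C a * Polynomial.X) (Polynomial.C v + Polynomial.C b * Polynomial.X) (Polynomial.C w + Polynomial.C c * Polynomial.X)).coeff 20 = Gn a b c := by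
  obtain ⟨h1, h2⟩ := lin_pow_coeff u a 20
  obtain ⟨h3, h4⟩ := lin_pow_coeff v b 20
  obtain ⟨h5, h6⟩ := lin_pow_coeff w c 20
  obtain ⟨h7, h8⟩ := lin_mul_coeff u a v b 15 5
  obtain ⟨h9, h10⟩ := lin_mul_coeff u a v b 5 15
  obtain ⟨h11, h12⟩ := lin_mul_coeff u a v b 10 10
  norm_num only at h7 h8 h9 h10 h11 h12
  have e : GP (Polynomial.C u + Polynomial.C a * Polynomial.X) (Polynomial.C v + Polynomial.C b * Polynomial.X) (Polynomial.C w + Polynomial.C c * Polynomial.X) =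
      (Polynomial.C w + Polynomial.C c * Polynomial.X) ^ 20 + ((Polynomial.C u + Polynomial.C a * Polynomial.X) ^ 20
        - Polynomial.C 228 * ((Polynomial.C u + Polynomial.C a * Polynomial.X) ^ 15 * (Polynomial.C v + Polynomial.C b * Polynomial.X) ^ 5
          - (Polynomial.C u + Polynomial.C a * Polynomial.X) ^ 5 * (Polynomial.C v + Polynomial.C b * Polynomial.X) ^ 15)
        + Polynomial.C 494 * ((Polynomial.C u + Polynomial.C a * Polynomial.X) ^ 10 * (Polynomial.C v + Polynomial.C b * Polynomial.X) ^ 10) + (Polynomial.C v + Polynomial.C b * Polynomial.X) ^ 20) := by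
    unfold GP
    rw [show (Polynomial.C 228 : Polynomial ℂ) = 228 from rfl, show (Polynomial.C 494 : Polynomial ℂ) = 494 from rfl]
    ring
  rw [e]
  constructor
  · refine Polynomial.natDegree_add_le_of_degree_le h5 (Polynomial.natDegree_add_le_of_degree_le
      (Polynomial.natDegree_add_le_of_degree_le (sub_deg h1 ?_) ?_) h3)
    · exact (Polynomial.natDegree_C_mul_le _ _).trans (sub_deg h7 h9)
    · exact (Polynomial.natDegree_C_mul_le _ _).trans h11
  · simp only [Polynomial.coeff_add, Polynomial.coeff_sub, Polynomial.coeff_C_mul, h2, h4, h6, h8, h10, h12]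
    unfold Gn Fn
    ring

theorem prop_aux (P : Polynomial ℂ) (k F : ℂ) (hF : F ≠ 0) (hd : P.natDegree ≤ 20) (hk : P.coeff 20 = k)
    (h : ∀ z : ℂ, z ^ 20 + F = 0 → P.eval z = 0) (z : ℂ) : P.eval z = k * (z ^ 20 + F) := by
  have hQd : (P - Polynomial.C k * (Polynomial.X ^ 20 + Polynomial.C F)).natDegree < 20 := by
    have h1 : (P - Polynomial.C k * (Polynomial.X ^ 20 + Polynomial.C F)).natDegree ≤ 20 := by
      apply sub_deg hd
      compute_degree
    rcases Nat.lt_or_eq_of_le h1 with h2 | h2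
    · exact h2
    · exfalso
      have h3 : (P - Polynomial.C k * (Polynomial.X ^ 20 + Polynomial.C F)).coeff 20 = 0 := by
        simp [hk, Polynomial.coeff_X_pow, Polynomial.coeff_C]
      have h4 : (P - Polynomial.C k * (Polynomial.X ^ 20 + Polynomial.C F)).leadingCoeff = 0 := by
        rw [Polynomial.leadingCoeff, h2, h3]
      rw [Polynomial.leadingCoeff_eq_zero] at h4
      rw [h4] at h2
      simp at h2
  obtain ⟨w, hw⟩ := IsAlgClosed.exists_pow_nat_eq (-F) (n := 20) (by norm_num)
  have hw0 : w ≠ 0 := by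
    rintro rfl
    apply hF
    linear_combination hw
  have hz := Complex.isPrimitiveRoot_exp 20 (by norm_num)
  set ζ := Complex.exp (2 * Real.pi * Complex.I / (20 : ℕ))
  have hz0 : P - Polynomial.C k * (Polynomial.X ^ 20 + Polynomial.C F) = 0 := by
    apply Polynomial.eq_zero_of_natDegree_lt_card_of_eval_eq_zero (ι := Fin 20) _ (f := fun i => w * ζ ^ (i : ℕ))
    · intro i j hij
      have := mul_left_cancel₀ hw0 hij
      exact Fin.ext (hz.pow_inj i.2 j.2 this)
    · intro i
      have h5 : (w * ζ ^ (i : ℕ)) ^ 20 + F = 0 := by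
        rw [mul_pow, ← pow_mul, mul_comm (i : ℕ) 20, pow_mul, hz.pow_eq_one, hw]
        simp
      simp only [Polynomial.eval_sub, Polynomial.eval_mul, Polynomial.eval_C, Polynomial.eval_add, Polynomial.eval_pow, Polynomial.eval_X]
      rw [h _ h5, h5]; ring
    · simpa using hQd
  have h6 := congrArg (Polynomial.eval z) hz0
  simp only [Polynomial.eval_sub, Polynomial.eval_mul, Polynomial.eval_C, Polynomial.eval_add, Polynomial.eval_pow, Polynomial.eval_X, Polynomial.eval_zero] at h6
  linear_combination h6

theorem Gn_prop (a1 a2 a3 b1 b2 b3 c1 c2 c3 : ℂ)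
    (h : ∀ x y z, Gn x y z = 0 → Gn (a1 * x + a2 * y + a3 * z) (b1 * x + b2 * y + b3 * z)
      (c1 * x + c2 * y + c3 * z) = 0) (x y z : ℂ) :
    Gn (a1 * x + a2 * y + a3 * z) (b1 * x + b2 * y + b3 * z) (c1 * x + c2 * y + c3 * z)
      = Gn a3 b3 c3 * Gn x y z := by
  have h1 : ∀ x y z, Fn x y ≠ 0 →
      Gn (a1 * x + a2 * y + a3 * z) (b1 * x + b2 * y + b3 * z) (c1 * x + c2 * y + c3 * z)
      = Gn a3 b3 c3 * Gn x y z := by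
    intro x y z hF
    obtain ⟨hd, hc⟩ := GP_lin (a1 * x + a2 * y) a3 (b1 * x + b2 * y) b3 (c1 * x + c2 * y) c3
    have := prop_aux _ _ (Fn x y) hF hd hc (by
      intro z hz
      rw [GP_eval]
      simp only [Polynomial.eval_add, Polynomial.eval_mul, Polynomial.eval_C, Polynomial.eval_X]
      exact h x y z hz) z
    rw [GP_eval] at this
    simp only [Polynomial.eval_add, Polynomial.eval_mul, Polynomial.eval_C, Polynomial.eval_X] at this
    exact this
  set P := GP (Polynomial.C (a1 * x + a2 * y + a3 * z) + Polynomial.C a1 * Polynomial.X) (Polynomial.C (b1 * x + b2 * y + b3 * z) + Polynomial.C b1 * Polynomial.X)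
      (Polynomial.C (c1 * x + c2 * y + c3 * z) + Polynomial.C c1 * Polynomial.X) - Polynomial.C (Gn a3 b3 c3) * GP (Polynomial.C x + Polynomial.X) (Polynomial.C y) (Polynomial.C z) with hP
  set R := GP (Polynomial.C x + Polynomial.X) (Polynomial.C y) 0 with hR
  have hPR : P * R = 0 := by
    apply Polynomial.funext
    intro t
    rw [Polynomial.eval_mul, Polynomial.eval_zero, hP, hR, Polynomial.eval_sub, Polynomial.eval_mul, GP_eval, GP_eval, GP_eval]
    simp only [Polynomial.eval_add, Polynomial.eval_mul, Polynomial.eval_C, Polynomial.eval_X, Polynomial.eval_zero]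
    by_cases hF : Fn (x + t) y = 0
    · rw [show Gn (x + t) y 0 = Fn (x + t) y by unfold Gn; ring, hF, mul_zero]
    · rw [← h1 _ _ _ hF, mul_eq_zero]
      left
      rw [sub_eq_zero]
      congr 1 <;> ring
  have hR0 : R ≠ 0 := by
    intro h0
    have h2 : ∀ t, Gn (x + t) y 0 = 0 := by
      intro t
      have := congrArg (Polynomial.eval t) h0
      rw [hR, GP_eval] at this
      simpa using this
    have h3 := h2 (-x)
    have h4 := h2 (1 - x)
    unfold Gn Fn at h3 h4
    have hy : y ^ 20 = 0 := by linear_combination h3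
    have hy : y = 0 := by simpa using hy
    rw [hy] at h4
    norm_num at h4
  have hP0 := (mul_eq_zero.1 hPR).resolve_right hR0
  have := congrArg (Polynomial.eval 0) hP0
  rw [hP, Polynomial.eval_sub, Polynomial.eval_mul, GP_eval, GP_eval] at this
  simp only [Polynomial.eval_add, Polynomial.eval_mul, Polynomial.eval_C, Polynomial.eval_X, Polynomial.eval_zero, mul_zero, add_zero] at this
  linear_combination this

/-! ### The Hessian -/

def Ha (x y : ℂ) : ℂ :=
  190 * x ^ 18 - 228 * (105 * x ^ 13 * y ^ 5 - 10 * x ^ 3 * y ^ 15) + 494 * 45 * x ^ 8 * y ^ 10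
def Hb (x y : ℂ) : ℂ :=
  - 228 * (75 * x ^ 14 * y ^ 4 - 75 * x ^ 4 * y ^ 14) / 2 + 494 * 50 * x ^ 9 * y ^ 9
def Hc (x y : ℂ) : ℂ :=
  190 * y ^ 18 - 228 * (10 * x ^ 15 * y ^ 3 - 105 * x ^ 5 * y ^ 13) + 494 * 45 * x ^ 10 * y ^ 8

/-- half of the Hessian matrix of `G` -/
def HM (x y z : ℂ) : Matrix (Fin 3) (Fin 3) ℂ :=
  !![Ha x y, Hb x y, 0; Hb x y, Hc x y, 0; 0, 0, 190 * z ^ 18]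

theorem HM_det (x y z : ℂ) : (HM x y z).det = 190 * z ^ 18 * (-433200) * fn x y ^ 3 := by
  unfold HM
  rw [Matrix.det_fin_three]
  simp
  unfold Ha Hb Hc fn
  ring

def Qn (x y z u v w : ℂ) : ℂ :=
  Ha x y * u ^ 2 + 2 * Hb x y * u * v + Hc x y * v ^ 2 + 190 * z ^ 18 * w ^ 2

theorem GP_coeff2 (x y z u v w : ℂ) :
    (Polynomial.derivative (Polynomial.derivative (GP (Polynomial.C x + Polynomial.C u * Polynomial.X) (Polynomial.C y + Polynomial.C v * Polynomial.X) (Polynomial.C z + Polynomial.C w * Polynomial.X)))).eval 0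
      = 2 * Qn x y z u v w := by
  unfold GP Qn Ha Hb Hc
  simp [Polynomial.derivative_pow]
  ring

/-! ### Linear maps preserving the curve are block diagonal -/

section block
variable (a1 a2 a3 b1 b2 b3 c1 c2 c3 : ℂ)

theorem Qn_inv (k : ℂ)
    (h : ∀ x y z, Gn (a1 * x + a2 * y + a3 * z) (b1 * x + b2 * y + b3 * z)
      (c1 * x + c2 * y + c3 * z) = k * Gn x y z) (x y z u v w : ℂ) :
    Qn (a1 * x + a2 * y + a3 * z) (b1 * x + b2 * y + b3 * z) (c1 * x + c2 * y + c3 * z)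
      (a1 * u + a2 * v + a3 * w) (b1 * u + b2 * v + b3 * w) (c1 * u + c2 * v + c3 * w)
      = k * Qn x y z u v w := by
  have e : GP (Polynomial.C (a1 * x + a2 * y + a3 * z) + Polynomial.C (a1 * u + a2 * v + a3 * w) * Polynomial.X)
      (Polynomial.C (b1 * x + b2 * y + b3 * z) + Polynomial.C (b1 * u + b2 * v + b3 * w) * Polynomial.X)
      (Polynomial.C (c1 * x + c2 * y + c3 * z) + Polynomial.C (c1 * u + c2 * v + c3 * w) * Polynomial.X)
      = Polynomial.C k * GP (Polynomial.C x + Polynomial.C u * Polynomial.X)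
        (Polynomial.C y + Polynomial.C v * Polynomial.X) (Polynomial.C z + Polynomial.C w * Polynomial.X) := by
    apply Polynomial.funext
    intro t
    rw [Polynomial.eval_mul, GP_eval, GP_eval]
    simp only [Polynomial.eval_add, Polynomial.eval_mul, Polynomial.eval_C, Polynomial.eval_X]
    rw [← h]
    congr 1 <;> ring
  have e2 := congrArg (fun p => (Polynomial.derivative (Polynomial.derivative p)).eval 0) e
  simp only [Polynomial.derivative_C_mul, Polynomial.eval_mul, Polynomial.eval_C, GP_coeff2] at e2
  linear_combination e2 / 2

theorem HM_inv (k : ℂ)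
    (h : ∀ x y z, Gn (a1 * x + a2 * y + a3 * z) (b1 * x + b2 * y + b3 * z)
      (c1 * x + c2 * y + c3 * z) = k * Gn x y z) (x y z : ℂ) :
    (!![a1, a2, a3; b1, b2, b3; c1, c2, c3])ᵀ *
      HM (a1 * x + a2 * y + a3 * z) (b1 * x + b2 * y + b3 * z) (c1 * x + c2 * y + c3 * z) *
      !![a1, a2, a3; b1, b2, b3; c1, c2, c3] = k • HM x y z := by
  have q := Qn_inv a1 a2 a3 b1 b2 b3 c1 c2 c3 k h x y z
  have q1 := q 1 0 0
  have q2 := q 0 1 0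
  have q3 := q 0 0 1
  have q12 := q 1 1 0
  have q13 := q 1 0 1
  have q23 := q 0 1 1
  clear q h
  unfold Qn at *
  unfold HM
  generalize Ha (a1 * x + a2 * y + a3 * z) (b1 * x + b2 * y + b3 * z) = A' at *
  generalize Hb (a1 * x + a2 * y + a3 * z) (b1 * x + b2 * y + b3 * z) = B' at *
  generalize Hc (a1 * x + a2 * y + a3 * z) (b1 * x + b2 * y + b3 * z) = C' at *
  generalize (c1 * x + c2 * y + c3 * z) ^ 18 = D' at *
  generalize Ha x y = A at *
  generalize Hb x y = B at *
  generalize Hc x y = C at *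
  generalize z ^ 18 = D at *
  ext i j
  fin_cases i <;> fin_cases j <;>
    simp [Matrix.mul_apply, Fin.sum_univ_three]
  · linear_combination q1
  · linear_combination (q12 - q1 - q2) / 2
  · linear_combination (q13 - q1 - q3) / 2
  · linear_combination (q12 - q1 - q2) / 2
  · linear_combination q2
  · linear_combination (q23 - q2 - q3) / 2
  · linear_combination (q13 - q1 - q3) / 2
  · linear_combination (q23 - q2 - q3) / 2
  · linear_combination q3

theorem hess_zero (k : ℂ)
    (h : ∀ x y z, Gn (a1 * x + a2 * y + a3 * z) (b1 * x + b2 * y + b3 * z)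
      (c1 * x + c2 * y + c3 * z) = k * Gn x y z)
    (hd : (!![a1, a2, a3; b1, b2, b3; c1, c2, c3]).det ≠ 0) (x y z : ℂ) (h0 : z * fn x y = 0) :
    (c1 * x + c2 * y + c3 * z) *
      fn (a1 * x + a2 * y + a3 * z) (b1 * x + b2 * y + b3 * z) = 0 := by
  have e := congrArg Matrix.det (HM_inv a1 a2 a3 b1 b2 b3 c1 c2 c3 k h x y z)
  rw [Matrix.det_mul, Matrix.det_mul, Matrix.det_transpose, Matrix.det_smul, HM_det, HM_det] at e
  have e0 : 190 * z ^ 18 * (-433200) * fn x y ^ 3 = 0 := by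
    rcases mul_eq_zero.1 h0 with h1 | h1 <;> rw [h1] <;> ring
  rw [e0, mul_zero] at e
  have := (mul_eq_zero.1 ((mul_eq_zero.1 e).resolve_right hd)).resolve_left hd
  rcases mul_eq_zero.1 this with h1 | h1
  · have h2 : (c1 * x + c2 * y + c3 * z) ^ 18 = 0 := by linear_combination h1 / (190 * (-433200))
    rw [pow_eq_zero_iff (by norm_num)] at h2
    rw [h2, zero_mul]
  · rw [pow_eq_zero_iff (by norm_num)] at h1
    rw [h1, mul_zero]

theorem fn_diag (D : ℂ) : fn D D = 11 * D ^ 12 := by unfold fn; ring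

theorem fn_diag' (D : ℂ) : fn D (-D) = 11 * D ^ 12 := by unfold fn; ring

theorem theta_step (x0 y0 : ℂ) (h0 : fn x0 y0 = 0)
    (h : ∀ x y z, z * fn x y = 0 → (c1 * x + c2 * y + c3 * z) *
      fn (a1 * x + a2 * y + a3 * z) (b1 * x + b2 * y + b3 * z) = 0) :
    (a1 * x0 + a2 * y0) * b3 - (b1 * x0 + b2 * y0) * a3 = 0 ∨ (c3 = 0 ∧ c1 * x0 + c2 * y0 = 0) := by
  by_cases hD : (a1 * x0 + a2 * y0) * b3 - (b1 * x0 + b2 * y0) * a3 = 0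
  · exact Or.inl hD
  right
  have hl : ∀ s t, (c1 * (t * x0) + c2 * (t * y0) + c3 * s) * fn (a1 * (t * x0) + a2 * (t * y0) + a3 * s)
      (b1 * (t * x0) + b2 * (t * y0) + b3 * s) = 0 := by
    intro s t
    apply h
    have : fn (t * x0) (t * y0) = t ^ 12 * fn x0 y0 := by unfold fn; ring
    rw [this, h0]; ring
  set a := a1 * x0 + a2 * y0 with ha
  set b := b1 * x0 + b2 * y0 with hb
  set d := c1 * x0 + c2 * y0 with hd
  set D := a * b3 - b * a3 with hDD
  have h1 := hl (a - b) (b3 - a3)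
  have h2 := hl (-a - b) (b3 + a3)
  rw [show a1 * ((b3 - a3) * x0) + a2 * ((b3 - a3) * y0) + a3 * (a - b) = D by rw [hDD, ha, hb]; ring,
    show b1 * ((b3 - a3) * x0) + b2 * ((b3 - a3) * y0) + b3 * (a - b) = D by rw [hDD, ha, hb]; ring,
    fn_diag] at h1
  rw [show a1 * ((b3 + a3) * x0) + a2 * ((b3 + a3) * y0) + a3 * (-a - b) = D by rw [hDD, ha, hb]; ring,
    show b1 * ((b3 + a3) * x0) + b2 * ((b3 + a3) * y0) + b3 * (-a - b) = -D by rw [hDD, ha, hb]; ring,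
    fn_diag'] at h2
  have hD12 : 11 * D ^ 12 ≠ 0 := mul_ne_zero (by norm_num) (pow_ne_zero _ hD)
  have h3 := (mul_eq_zero.1 h1).resolve_right hD12
  have h4 := (mul_eq_zero.1 h2).resolve_right hD12
  have h5 : b3 * d - b * c3 = 0 := by rw [hd]; linear_combination (h3 + h4) / 2
  have h6 : a3 * d - a * c3 = 0 := by rw [hd]; linear_combination (h4 - h3) / 2
  constructor
  · apply (mul_eq_zero.1 _).resolve_left hD
    rw [hDD]; linear_combination a3 * h5 - b3 * h6
  · apply (mul_eq_zero.1 _).resolve_left hD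
    rw [hDD]; linear_combination a * h5 - b * h6

theorem col_zero (hdet : (!![a1, a2, a3; b1, b2, b3; c1, c2, c3]).det ≠ 0)
    (h : ∀ x y z, z * fn x y = 0 → (c1 * x + c2 * y + c3 * z) *
      fn (a1 * x + a2 * y + a3 * z) (b1 * x + b2 * y + b3 * z) = 0) : a3 = 0 ∧ b3 = 0 := by
  rw [Matrix.det_fin_three] at hdet
  simp at hdet
  have key : a1 * b3 - b1 * a3 = 0 → a2 * b3 - b2 * a3 = 0 → a3 = 0 ∧ b3 = 0 := by
    intro h1 h2
    constructor
    · by_contra h3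
      apply mul_ne_zero h3 hdet
      linear_combination h1 * (a2 * c3 - a3 * c2) - h2 * (a1 * c3 - a3 * c1)
    · by_contra h3
      apply mul_ne_zero h3 hdet
      linear_combination h1 * (b2 * c3 - b3 * c2) - h2 * (b1 * c3 - b3 * c1)
  have keyd : c3 = 0 → c1 = 0 → c2 = 0 → a3 = 0 ∧ b3 = 0 := by
    rintro rfl rfl rfl
    exact absurd (by ring) hdet
  have hs := s1_rel
  set σ := ee + ee ^ 4
  have hs0 : σ ≠ 0 := by
    intro h0
    rw [h0] at hs
    norm_num at hs
  have t1 := theta_step a1 a2 a3 b1 b2 b3 c1 c2 c3 1 0 (by unfold fn; ring) h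
  have t2 := theta_step a1 a2 a3 b1 b2 b3 c1 c2 c3 0 1 (by unfold fn; ring) h
  have t3 := theta_step a1 a2 a3 b1 b2 b3 c1 c2 c3 σ 1 (by
    unfold fn
    linear_combination (σ * (σ^8 - σ^7 + 2 * σ^6 - 3 * σ^5 + 5 * σ^4 + 3 * σ^3 + 2 * σ^2 + σ + 1)) * hs) h
  simp only [mul_one, mul_zero, add_zero, zero_add] at t1 t2 t3
  rcases t1 with t1 | ⟨r, t1⟩
  · rcases t2 with t2 | ⟨r, t2⟩
    · exact key t1 t2
    · rcases t3 with t3 | ⟨r, t3⟩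
      · exact key t1 (by linear_combination t3 - σ * t1)
      · refine keyd r ?_ t2
        apply (mul_eq_zero.1 _).resolve_left hs0
        linear_combination t3 - t2
  · rcases t2 with t2 | ⟨r, t2⟩
    · rcases t3 with t3 | ⟨r, t3⟩
      · refine key ?_ t2
        apply (mul_eq_zero.1 _).resolve_left hs0
        linear_combination t3 - t2
      · exact keyd r t1 (by linear_combination t3 - σ * t1)
    · exact keyd r t1 t2

theorem Gn_zero_hom (c x y z w t : ℂ) :
    Gn (c * x) (c * y) (0 * z + 0 * w + t * 0) = c ^ 20 * Fn x y := by
  unfold Gn Fn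
  ring

theorem block_of_preserve (hdet : (!![a1, a2, a3; b1, b2, b3; c1, c2, c3]).det ≠ 0)
    (h : ∀ x y z, Gn x y z = 0 → Gn (a1 * x + a2 * y + a3 * z) (b1 * x + b2 * y + b3 * z)
      (c1 * x + c2 * y + c3 * z) = 0) :
    a3 = 0 ∧ b3 = 0 ∧ c1 = 0 ∧ c2 = 0 ∧ c3 ≠ 0 ∧ a1 * b2 - a2 * b1 ≠ 0 ∧
      Inv2 !![a1 / c3, a2 / c3; b1 / c3, b2 / c3] ∧ fn a1 b1 = 0 := by
  have hk := Gn_prop a1 a2 a3 b1 b2 b3 c1 c2 c3 h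
  have hz := hess_zero a1 a2 a3 b1 b2 b3 c1 c2 c3 _ hk hdet
  obtain ⟨rfl, rfl⟩ := col_zero a1 a2 a3 b1 b2 b3 c1 c2 c3 hdet hz
  have hq := Qn_inv a1 a2 0 b1 b2 0 c1 c2 c3 _ hk 0 0 1
  rw [Matrix.det_fin_three] at hdet
  simp at hdet
  have hc3 : c3 ≠ 0 := by
    rintro rfl
    exact hdet (by ring)
  have hc18 : 190 * c3 ^ 18 ≠ 0 := mul_ne_zero (by norm_num) (pow_ne_zero _ hc3)
  have h1 : c1 = 0 := by
    have := hq 1 0 0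
    unfold Qn Ha Hb Hc at this
    simp only [mul_zero, add_zero, zero_add, mul_one, zero_mul, ne_eq, OfNat.ofNat_ne_zero,
      not_false_eq_true, zero_pow, sub_zero, zero_div] at this
    have : (190 * c3 ^ 18) * c1 ^ 2 = 0 := by linear_combination this
    simpa using (mul_eq_zero.1 this).resolve_left hc18
  have h2 : c2 = 0 := by
    have := hq 0 1 0
    unfold Qn Ha Hb Hc at this
    simp only [mul_zero, add_zero, zero_add, mul_one, zero_mul, ne_eq, OfNat.ofNat_ne_zero,
      not_false_eq_true, zero_pow, sub_zero, zero_div] at this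
    have : (190 * c3 ^ 18) * c2 ^ 2 = 0 := by linear_combination this
    simpa using (mul_eq_zero.1 this).resolve_left hc18
  subst h1 h2
  refine ⟨rfl, rfl, rfl, rfl, hc3, ?_, ?_, ?_⟩
  · intro h0
    exact hdet (by linear_combination c3 * h0)
  · intro x y
    have e := hk x y 0
    have e1 : Gn 0 0 c3 = c3 ^ 20 := by unfold Gn Fn; ring
    have e2 : Gn x y 0 = Fn x y := by unfold Gn; ring
    have e3 : Gn (a1 * x + a2 * y + 0 * 0) (b1 * x + b2 * y + 0 * 0) (0 * x + 0 * y + c3 * 0)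
        = c3 ^ 20 * Fn (a1 / c3 * x + a2 / c3 * y) (b1 / c3 * x + b2 / c3 * y) := by
      have hX : a1 * x + a2 * y + 0 * 0 = c3 * (a1 / c3 * x + a2 / c3 * y) := by field_simp; ring
      have hY : b1 * x + b2 * y + 0 * 0 = c3 * (b1 / c3 * x + b2 / c3 * y) := by field_simp; ring
      rw [hX, hY, Gn_zero_hom]
    rw [e1, e2, e3] at e
    have := mul_left_cancel₀ (pow_ne_zero 20 hc3) e
    simpa using this
  · have := hz 1 0 1 (by unfold fn; ring)
    simp at this
    exact this.resolve_left hc3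

end block

/-! ### Classification of the matrices preserving `Fn` -/

theorem tri_inv (α β δ : ℂ) (h : Inv2 !![α, β; 0, δ]) :
    ∃ g, α ^ 20 = 1 ∧ !![α, β; 0, δ] = (α * pf g 1 1) • pf g ∧ (pf g 1 1) ^ 5 = 1 := by
  unfold Inv2 at h
  simp at h
  have h10 := h 1 0
  have h01 := h 0 1
  have hα : α ^ 20 = 1 := by
    unfold Fn at h10
    linear_combination h10
  have hα0 : α ≠ 0 := by
    rintro rfl
    norm_num at hα
  have e : GP (Polynomial.C (α : ℂ) + Polynomial.C β * Polynomial.X) (Polynomial.C 0 + Polynomial.C δ * Polynomial.X)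
      (Polynomial.C 0 + Polynomial.C 0 * Polynomial.X)
      = GP (Polynomial.C 1 + Polynomial.C 0 * Polynomial.X)
        (Polynomial.C 0 + Polynomial.C 1 * Polynomial.X) (Polynomial.C 0 + Polynomial.C 0 * Polynomial.X) := by
    apply Polynomial.funext
    intro t
    rw [GP_eval, GP_eval]
    simp only [Polynomial.eval_add, Polynomial.eval_mul, Polynomial.eval_C, Polynomial.eval_X]
    unfold Gn
    have := h 1 t
    simp only [zero_mul, mul_zero, add_zero, zero_add, mul_one, one_mul] at this ⊢
    rw [this]
  have e2 := congrArg (fun p => (Polynomial.derivative (Polynomial.derivative p)).eval 0) e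
  simp only [GP_coeff2] at e2
  have hβ : β = 0 := by
    unfold Qn Ha Hb Hc at e2
    have : (380 * α ^ 18) * β ^ 2 = 0 := by linear_combination e2
    simpa using (mul_eq_zero.1 this).resolve_left (mul_ne_zero (by norm_num) (pow_ne_zero _ hα0))
  subst hβ
  simp only [zero_mul, add_zero, zero_add] at h
  have k1 := h 1 1
  have k2 := h 1 (-1)
  have k3 := h 1 Complex.I
  have hI := Complex.I_sq
  have hv4 : δ ^ 20 = 1 := by
    unfold Fn at h01
    linear_combination h01
  have huv : α ^ 15 * δ ^ 5 = 1 := by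
    unfold Fn at k1 k2 k3
    have d1 : α ^ 15 * δ ^ 5 - α ^ 5 * δ ^ 15 = 0 := by
      linear_combination (k2 - k1) / 456
    have d2 : α ^ 10 * δ ^ 10 = 1 := by
      linear_combination (k2 + k1) / 988 - (hα + hv4) / 494
    have e4 : Complex.I ^ 4 = 1 := Complex.I_pow_four
    have e5 : Complex.I ^ 5 = Complex.I := by rw [pow_succ, e4, one_mul]
    have e10 : Complex.I ^ 10 = -1 := by
      rw [show (10 : ℕ) = 5 * 2 from rfl, pow_mul, e5, hI]
    have e15 : Complex.I ^ 15 = -Complex.I := by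
      rw [show (15 : ℕ) = 10 + 5 from rfl, pow_add, e10, e5]; ring
    have e20 : Complex.I ^ 20 = 1 := by
      rw [show (20 : ℕ) = 4 * 5 from rfl, pow_mul, e4, one_pow]
    simp only [mul_pow, e5, e10, e15, e20, one_pow] at k3
    have d3 : Complex.I * (α ^ 15 * δ ^ 5 + α ^ 5 * δ ^ 15 - 2) = 0 := by
      linear_combination (k3 - hα - hv4 + 494 * d2) / (-228)
    have d4 := (mul_eq_zero.1 d3).resolve_left Complex.I_ne_zero
    linear_combination (d1 + d4) / 2
  have h5 : (δ / α) ^ 5 = 1 := by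
    rw [div_pow, div_eq_one_iff_eq (pow_ne_zero _ hα0)]
    linear_combination α ^ 5 * huv - δ ^ 5 * hα
  obtain ⟨k, hk⟩ := exists_EE h5
  have hδ : δ = α * EE k := by rw [← hk]; field_simp
  refine ⟨mkg 1 (-k) 0 1 (by ring), hα, ?_, ?_⟩
  · rw [pf_mkg, pm_u, hδ]
    have e1 : EE (2 * -k) * EE (3 * -k) = 1 := by
      rw [← EE_add, ← EE_zero]
      congr 1
      clear * - k
      revert k; decide
    have e2 : EE (2 * -k) * EE (2 * -k) = EE k := by
      rw [← EE_add]
      congr 1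
      clear * - k
      revert k; decide
    ext i j
    fin_cases i <;> fin_cases j <;> simp [-mul_neg, mul_assoc, e1, e2]
  · rw [pf_mkg, pm_u]
    simp [EE_pow_five]

theorem Inv2_class (B : Matrix (Fin 2) (Fin 2) ℂ) (hd : B.det ≠ 0) (h : Inv2 B)
    (hf : fn (B 0 0) (B 1 0) = 0) : ∃ (g : SL25) (z : ℂ), z ^ 20 = 1 ∧ B = z • pf g := by
  rw [Matrix.det_fin_two] at hd
  have h0 : B 0 0 ≠ 0 ∨ B 1 0 ≠ 0 := by
    by_contra hc
    push Not at hc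
    rw [hc.1, hc.2] at hd
    exact hd (by ring)
  obtain ⟨g, l, h1, h2⟩ := fn_trans _ _ h0 hf
  have hm : pf g⁻¹ * pf g = 1 := by rw [← pf_mul, inv_mul_cancel, pf_one]
  have hm' : pf g * pf g⁻¹ = 1 := by rw [← pf_mul, mul_inv_cancel, pf_one]
  have hT : Inv2 (pf g⁻¹ * B) := Inv2_mul (pf_inv _) h
  have h10 : (pf g⁻¹ * B) 1 0 = 0 := by
    have := congrFun (congrFun hm 1) 0
    simp only [Matrix.mul_apply, Fin.sum_univ_two] at this ⊢
    rw [h1, h2]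
    simp at this
    linear_combination l * this
  have hshape : pf g⁻¹ * B = !![(pf g⁻¹ * B) 0 0, (pf g⁻¹ * B) 0 1; 0, (pf g⁻¹ * B) 1 1] := by
    rw [← h10]
    exact Matrix.eta_fin_two _
  rw [hshape] at hT
  obtain ⟨g', hα, e, h5⟩ := tri_inv _ _ _ hT
  refine ⟨g * g', (pf g⁻¹ * B) 0 0 * pf g' 1 1, ?_, ?_⟩
  · rw [mul_pow, hα, show (20 : ℕ) = 5 * 4 from rfl, pow_mul, h5]; ring
  · rw [pf_mul, ← Matrix.mul_smul, ← e, ← hshape, ← mul_assoc, hm', one_mul]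

/-! ### The abstract group and its representation -/

def Jm (e : ZMod 2) : Matrix (Fin 2) (Fin 2) ℂ := if e = 0 then 1 else Complex.I • pf hh

def phiF (e : ZMod 2) : MulAut SL25 := if e = 0 then 1 else MulAut.conj hh

def nn : SL25 := mkg 4 0 0 4 (by decide)

theorem hh_sq : hh * hh = nn := by
  unfold hh nn
  rw [mkg_mul]
  exact mkg_congr _ _ (by decide) (by decide) (by decide) (by decide)

theorem nn_comm (g : SL25) : nn * g = g * nn := by
  obtain ⟨a, b, c, d, h, rfl⟩ := exists_mkg g
  unfold nn
  rw [mkg_mul, mkg_mul]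
  exact mkg_congr _ _ (by ring) (by ring) (by ring) (by ring)

theorem pf_nn : pf nn = -1 := by
  have : pf nn = pm 4 0 0 4 := rfl
  rw [this, pm_neg]
  ext i j
  fin_cases i <;> fin_cases j <;> simp

theorem zmod2_cases (e : ZMod 2) : e = 0 ∨ e = 1 := by
  revert e; decide

theorem Jm_zero : Jm 0 = 1 := if_pos rfl
theorem Jm_one : Jm 1 = Complex.I • pf hh := if_neg (by decide)
theorem phiF_zero : phiF 0 = 1 := if_pos rfl
theorem phiF_one : phiF 1 = MulAut.conj hh := if_neg (by decide)

theorem Jm_add (a b : ZMod 2) : Jm (a + b) = Jm a * Jm b := by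
  rcases zmod2_cases a with rfl | rfl
  · rw [zero_add, Jm_zero, one_mul]
  rcases zmod2_cases b with rfl | rfl
  · rw [add_zero, Jm_zero, mul_one]
  rw [show (1 + 1 : ZMod 2) = 0 from rfl, Jm_zero, Jm_one, Matrix.smul_mul, Matrix.mul_smul,
    ← pf_mul, hh_sq, pf_nn, smul_smul, Complex.I_mul_I]
  simp

theorem phiF_add (a b : ZMod 2) : phiF (a + b) = phiF a * phiF b := by
  rcases zmod2_cases a with rfl | rfl
  · rw [zero_add, phiF_zero, one_mul]
  rcases zmod2_cases b with rfl | rfl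
  · rw [add_zero, phiF_zero, mul_one]
  rw [show (1 + 1 : ZMod 2) = 0 from rfl, phiF_zero, phiF_one, ← map_mul, hh_sq]
  ext1 g
  rw [MulAut.conj_apply, nn_comm, mul_assoc, mul_inv_cancel, mul_one]
  rfl

theorem Jm_comm (e : ZMod 2) (g : SL25) : Jm e * pf g = pf (phiF e g) * Jm e := by
  rcases zmod2_cases e with rfl | rfl
  · rw [Jm_zero, phiF_zero, one_mul, mul_one]
    rfl
  · rw [Jm_one, phiF_one, MulAut.conj_apply, Matrix.smul_mul, Matrix.mul_smul, ← pf_mul, ← pf_mul,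
      mul_assoc (hh * g), inv_mul_cancel, mul_one]

theorem Jm_inv (e : ZMod 2) : Inv2 (Jm e) := by
  rcases zmod2_cases e with rfl | rfl
  · rw [Jm_zero]
    exact Inv2_one
  · rw [Jm_one]
    apply Inv2_smul (pf_inv _)
    rw [show (20 : ℕ) = 4 * 5 from rfl, pow_mul, Complex.I_pow_four, one_pow]

def phi : Multiplicative (ZMod 2) →* MulAut SL25 where
  toFun e := phiF e.toAdd
  map_one' := phiF_zero
  map_mul' a b := phiF_add a.toAdd b.toAdd

abbrev DD := Multiplicative (ZMod 5) × (SL25 ⋊[phi] Multiplicative (ZMod 2))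

def Theta : DD →* Matrix (Fin 2) (Fin 2) ℂ where
  toFun d := EE d.1.toAdd • (pf d.2.left * Jm d.2.right.toAdd)
  map_one' := by
    show EE 0 • (pf 1 * Jm 0) = 1
    rw [EE_zero, pf_one, Jm_zero, one_mul, one_smul]
  map_mul' := by
    rintro ⟨k, g, e⟩ ⟨k', g', e'⟩
    show EE (k.toAdd + k'.toAdd) • (pf (g * phiF e.toAdd g') * Jm (e.toAdd + e'.toAdd)) =
      (EE k.toAdd • (pf g * Jm e.toAdd)) * (EE k'.toAdd • (pf g' * Jm e'.toAdd))
    rw [EE_add, pf_mul, Jm_add, Matrix.smul_mul, Matrix.mul_smul, smul_smul]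
    congr 1
    rw [mul_assoc, mul_assoc, ← mul_assoc (Jm _) (pf g'), Jm_comm]
    simp only [mul_assoc]

theorem Theta_inv (d : DD) : Inv2 (Theta d) := by
  show Inv2 (EE d.1.toAdd • (pf d.2.left * Jm d.2.right.toAdd))
  apply Inv2_smul (Inv2_mul (pf_inv _) (Jm_inv _))
  rw [show (20 : ℕ) = 5 * 4 from rfl, pow_mul, EE_pow_five, one_pow]

theorem Theta_inj (d : DD) (h : Theta d = 1) : d = 1 := by
  obtain ⟨k, g, e⟩ := d
  have h : EE k.toAdd • (pf g * Jm e.toAdd) = 1 := h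
  have hd := congrArg Matrix.det h
  rw [Matrix.det_smul, Matrix.det_mul, pf_det, Matrix.det_one, one_mul, Fintype.card_fin] at hd
  have hk5 := EE_pow_five k.toAdd
  have he : e.toAdd = 0 := by
    rcases zmod2_cases e.toAdd with he | he
    · exact he
    · exfalso
      rw [he, Jm_one, Matrix.det_smul, pf_det, Fintype.card_fin, Complex.I_sq] at hd
      have h2 : EE k.toAdd ^ 2 = -1 := by linear_combination -hd
      have h3 : (EE k.toAdd ^ 2) ^ 5 = 1 := by rw [← pow_mul, mul_comm, pow_mul, hk5, one_pow]
      rw [h2] at h3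
      norm_num at h3
  rw [he, Jm_zero, Matrix.det_one, mul_one] at hd
  have hk1 : EE k.toAdd = 1 := by
    linear_combination hk5 - (EE k.toAdd ^ 3 + EE k.toAdd) * hd
  rw [he, Jm_zero, mul_one, hk1, one_smul] at h
  have hg := pf_inj g h
  have hk := EE_inj hk1
  subst hg
  have hk' : k = 1 := hk
  have he' : e = 1 := he
  subst hk' he'
  rfl

theorem iota_case (i : ℂ) (h : i ^ 4 = 1) (g : SL25) : ∃ g' e, i • pf g = pf g' * Jm e := by
  have hI := Complex.I_sq
  have h1 : (i - 1) * ((i + 1) * ((i - Complex.I) * (i + Complex.I))) = 0 := by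
    linear_combination h - (i ^ 2 - 1) * hI
  have hm : pf g = pf (g * hh⁻¹) * pf hh := by rw [← pf_mul, mul_assoc, inv_mul_cancel, mul_one]
  rcases mul_eq_zero.1 h1 with h1 | h1
  · exact ⟨g, 0, by rw [Jm_zero, mul_one, sub_eq_zero.1 h1, one_smul]⟩
  rcases mul_eq_zero.1 h1 with h1 | h1
  · refine ⟨g * nn, 0, ?_⟩
    rw [Jm_zero, mul_one, pf_mul, pf_nn, eq_neg_of_add_eq_zero_left h1]
    simp
  rcases mul_eq_zero.1 h1 with h1 | h1
  · refine ⟨g * hh⁻¹, 1, ?_⟩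
    rw [Jm_one, Matrix.mul_smul, ← hm, sub_eq_zero.1 h1]
  · refine ⟨nn * (g * hh⁻¹), 1, ?_⟩
    rw [Jm_one, Matrix.mul_smul, pf_mul, mul_assoc, ← hm, eq_neg_of_add_eq_zero_left h1, pf_nn]
    simp

theorem Theta_surj (z : ℂ) (hz : z ^ 20 = 1) (g : SL25) : ∃ d, Theta d = z • pf g := by
  have hz0 : z ≠ 0 := by
    rintro rfl
    norm_num at hz
  have h4 : (z ^ 5) ^ 4 = 1 := by rw [← pow_mul]; exact hz
  have h5 : (z / z ^ 5) ^ 5 = 1 := by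
    rw [div_pow, div_eq_one_iff_eq (pow_ne_zero _ (pow_ne_zero _ hz0))]
    linear_combination -z ^ 5 * hz
  obtain ⟨k, hk⟩ := exists_EE h5
  obtain ⟨g', e, he⟩ := iota_case _ h4 g
  refine ⟨⟨Multiplicative.ofAdd k, g', Multiplicative.ofAdd e⟩, ?_⟩
  show EE k • (pf g' * Jm e) = z • pf g
  rw [← he, ← hk, smul_smul]
  congr 1
  field_simp

/-! ### Passage to `PGL3` -/

def blk : Matrix (Fin 2) (Fin 2) ℂ →* Matrix (Fin 3) (Fin 3) ℂ where
  toFun B := !![B 0 0, B 0 1, 0; B 1 0, B 1 1, 0; 0, 0, 1]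
  map_one' := by
    ext i j
    fin_cases i <;> fin_cases j <;> simp
  map_mul' A B := by
    ext i j
    fin_cases i <;> fin_cases j <;> simp [Matrix.mul_apply, Fin.sum_univ_succ]

theorem blk_apply (B : Matrix (Fin 2) (Fin 2) ℂ) :
    blk B = !![B 0 0, B 0 1, 0; B 1 0, B 1 1, 0; 0, 0, 1] := rfl

def XiU : DD →* GL (Fin 3) ℂ := (blk.comp Theta).toHomUnits

theorem XiU_val (d : DD) : (XiU d : Matrix (Fin 3) (Fin 3) ℂ) = blk (Theta d) := rfl

def Xi : DD →* PGL3 := (QuotientGroup.mk' scalarSub).comp XiU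

theorem Xi_inj : Function.Injective Xi := by
  rw [injective_iff_map_eq_one]
  intro d hd
  have h1 : XiU d ∈ scalarSub := (QuotientGroup.eq_one_iff _).1 hd
  obtain ⟨c, hc⟩ := h1
  have h2 := congrArg (fun u : GL (Fin 3) ℂ => (u : Matrix (Fin 3) (Fin 3) ℂ)) hc
  have h2 : algebraMap ℂ (Matrix (Fin 3) (Fin 3) ℂ) c = blk (Theta d) := h2
  rw [Matrix.algebraMap_eq_diagonal, blk_apply] at h2
  have e := fun i j => congrFun (congrFun h2 i) j
  have e22 := e 2 2
  have e00 := e 0 0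
  have e01 := e 0 1
  have e10 := e 1 0
  have e11 := e 1 1
  simp [Matrix.diagonal] at e22 e00 e01 e10 e11
  apply Theta_inj
  ext i j
  fin_cases i <;> fin_cases j <;> simp
  · rw [← e00]; simpa using e22
  · exact e01.symm
  · exact e10.symm
  · rw [← e11]; simpa using e22

theorem eval_G20 (v : Fin 3 → ℂ) : eval v G20 = Gn (v 0) (v 1) (v 2) := by
  unfold G20 Gn Fn
  simp

theorem preserves_of_inv (F : MvPolynomial (Fin 3) ℂ) (g : GL (Fin 3) ℂ)
    (h : ∀ v, eval ((g : Matrix (Fin 3) (Fin 3) ℂ).mulVec v) F = eval v F) : Preserves F g := by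
  unfold Preserves
  ext v
  simp only [Set.mem_image, Set.mem_ofPred_eq]
  constructor
  · rintro ⟨w, hw, rfl⟩
    rw [h, hw]
  · intro hv
    have e : (g : Matrix (Fin 3) (Fin 3) ℂ).mulVec
        (((g⁻¹ : GL (Fin 3) ℂ) : Matrix (Fin 3) (Fin 3) ℂ).mulVec v) = v := by
      rw [Matrix.mulVec_mulVec, ← Units.val_mul, mul_inv_cancel, Units.val_one, Matrix.one_mulVec]
    refine ⟨((g⁻¹ : GL (Fin 3) ℂ) : Matrix (Fin 3) (Fin 3) ℂ).mulVec v, ?_, e⟩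
    rw [← h, e, hv]

theorem XiU_mem (d : DD) : XiU d ∈ LinGL G20 := by
  apply preserves_of_inv
  intro v
  rw [eval_G20, eval_G20, XiU_val, blk_apply]
  have := Theta_inv d (v 0) (v 1)
  simp [Matrix.mulVec, dotProduct, Fin.sum_univ_three]
  unfold Gn
  rw [this]

theorem LinGL_class (g : GL (Fin 3) ℂ) (hg : g ∈ LinGL G20) : ∃ d, Xi d = QuotientGroup.mk' scalarSub g := by
  have hP : Preserves G20 g := hg
  set A := (g : Matrix (Fin 3) (Fin 3) ℂ) with hA
  have hdet : A.det ≠ 0 := ((Matrix.isUnit_iff_isUnit_det A).1 g.isUnit).ne_zero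
  have heta := Matrix.eta_fin_three A
  have h0 : ∀ x y z, Gn x y z = 0 → Gn (A 0 0 * x + A 0 1 * y + A 0 2 * z)
      (A 1 0 * x + A 1 1 * y + A 1 2 * z) (A 2 0 * x + A 2 1 * y + A 2 2 * z) = 0 := by
    intro x y z h
    have hm : A.mulVec ![x, y, z] ∈ {v : Fin 3 → ℂ | eval v G20 = 0} := by
      rw [← hP]
      refine ⟨![x, y, z], ?_, rfl⟩
      show eval _ G20 = 0
      rw [eval_G20]
      simpa using h
    have hm : eval (A.mulVec ![x, y, z]) G20 = 0 := hm
    rw [eval_G20] at hm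
    simpa [Matrix.mulVec, dotProduct, Fin.sum_univ_three] using hm
  rw [heta] at hdet
  obtain ⟨h1, h2, h3, h4, hc, hD, hI, hf⟩ := block_of_preserve _ _ _ _ _ _ _ _ _ hdet h0
  obtain ⟨s, z, hz, hs⟩ := Inv2_class _ (by
    rw [Matrix.det_fin_two]
    simp
    intro h
    apply hD
    field_simp at h
    linear_combination h) hI (by
    simp
    have : fn (A 0 0 / A 2 2) (A 1 0 / A 2 2) = fn (A 0 0) (A 1 0) / A 2 2 ^ 12 := by
      unfold fn
      field_simp
    rw [this, hf, zero_div])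
  obtain ⟨d, hd⟩ := Theta_surj z hz s
  rw [← hs] at hd
  refine ⟨d, ?_⟩
  refine (QuotientGroup.eq).2 ?_
  refine ⟨Units.mk0 _ hc, ?_⟩
  rw [eq_inv_mul_iff_mul_eq]
  apply Units.ext
  rw [Units.val_mul, XiU_val, hd, blk_apply]
  show _ * algebraMap ℂ (Matrix (Fin 3) (Fin 3) ℂ) (A 2 2) = A
  rw [Matrix.algebraMap_eq_diagonal]
  ext i j
  fin_cases i <;> fin_cases j <;> simp [Matrix.mul_apply, Fin.sum_univ_three, Matrix.diagonal, h1, h2, h3, h4, hc]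

theorem Xi_range : Xi.range = Lin G20 := by
  ext q
  constructor
  · rintro ⟨d, rfl⟩
    exact ⟨XiU d, XiU_mem d, rfl⟩
  · rintro ⟨g, hg, rfl⟩
    exact LinGL_class g hg

def LinIso : DD ≃* Lin G20 := (MonoidHom.ofInjective Xi_inj).trans (MulEquiv.subgroupCongr Xi_range)

def SLequiv : SL25 ≃ {p : (ZMod 5 × ZMod 5) × ZMod 5 × ZMod 5 // p.1.1 * p.2.2 - p.1.2 * p.2.1 = 1} where
  toFun g := ⟨((g.1 0 0, g.1 0 1), (g.1 1 0, g.1 1 1)), by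
    have := g.2
    rwa [Matrix.det_fin_two] at this⟩
  invFun p := mkg p.1.1.1 p.1.1.2 p.1.2.1 p.1.2.2 p.2
  left_inv g := by
    obtain ⟨a, b, c, d, h, rfl⟩ := exists_mkg g
    rfl
  right_inv p := rfl

theorem SL_card : Nat.card SL25 = 120 := by
  rw [Nat.card_congr SLequiv, Nat.card_eq_fintype_card]
  decide +kernel

theorem DD_card : Nat.card DD = 1200 := by
  rw [Nat.card_prod, Nat.card_congr SemidirectProduct.equivProd, Nat.card_prod, SL_card]
  have h2 : Nat.card (Multiplicative (ZMod 2)) = 2 := Nat.card_zmod 2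
  have h5 : Nat.card (Multiplicative (ZMod 5)) = 5 := Nat.card_zmod 5
  rw [h2, h5]



theorem stmt7 :
    Nat.card (Lin G20) = 1200 ∧
    ∃ φ : Multiplicative (ZMod 2) →* MulAut (Matrix.SpecialLinearGroup (Fin 2) (ZMod 5)),
      Nonempty (Lin G20 ≃*
        Multiplicative (ZMod 5) ×
          (Matrix.SpecialLinearGroup (Fin 2) (ZMod 5) ⋊[φ] Multiplicative (ZMod 2))) := by
  refine ⟨?_, phi, ⟨LinIso.symm⟩⟩
  rw [← Nat.card_congr LinIso.toEquiv]
  exact DD_card
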